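/- arXiv:1105.5127 — 4 statements merged into one kernel-verified Lean document; each statement's English description precedes it below -/
import Mathlib

section
/- For every ε > 0 there is a constant C_ε such that for every nonzero integer b and every real X ≥ 2 with |b| ≤ X, the number of triples (a, c, d) ∈ ℤ³ with |a| ≤ X, |c| ≤ X, |d| ≤ X satisfying Descartes' equation 2(a²+b²+c²+d²) = (a+b+c+d)² is at most C_ε · X^{1+ε}. -/
/-!
Descartes' equation in `(a, b, c, d)` says that `d = a + b + c + 2 * m` for an integer `m` with
`(a + b) * (c + b) = b ^ 2 + m ^ 2`. For fixed `b ≠ 0` a solution is therefore determined by `m`,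
which takes `O(X)` values, together with a factorisation of the nonzero integer `b ^ 2 + m ^ 2`,
which is `O(X ^ 2)`. By the divisor bound there are `O(X ^ ε)` factorisations for each `m`.

For the divisor bound, write `τ(n) / n ^ δ` as the product of `(k + 1) / (p ^ δ) ^ k` over the prime
powers `p ^ k` exactly dividing `n`. A factor is at most `1` as soon as `2 ≤ p ^ δ`, and each of the
boundedly many remaining factors is bounded in terms of `δ` only.
-/

open Finset

theorem natCast_add_one_le_pow_of_two_le {y : ℝ} (hy : 2 ≤ y) (k : ℕ) : (k : ℝ) + 1 ≤ y ^ k :=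
  calc (k : ℝ) + 1 = 1 + k * (2 - 1) := by ring
    _ ≤ 1 + k * (y - 1) := by gcongr
    _ ≤ y ^ k := one_add_mul_sub_le_pow (by linarith) k

theorem natCast_add_one_le_div_mul_pow {y : ℝ} (hy : 1 < y) (k : ℕ) :
    (k : ℝ) + 1 ≤ y / (y - 1) * y ^ k := by
  have hy_sub : 0 < y - 1 := sub_pos.mpr hy
  calc (k : ℝ) + 1 ≤ y / (y - 1) + k * y := by
        have one_le_ratio : 1 ≤ y / (y - 1) := (one_le_div hy_sub).mpr (by linarith)
        have k_le_mul : (k : ℝ) ≤ k * y := le_mul_of_one_le_right k.cast_nonneg hy.le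
        linarith
    _ = y / (y - 1) * (1 + k * (y - 1)) := by field_simp
    _ ≤ y / (y - 1) * y ^ k := by
        gcongr
        exact one_add_mul_sub_le_pow (by linarith) k

theorem natCast_rpow_eq_prod_primeFactors {n : ℕ} (hn : n ≠ 0) (δ : ℝ) :
    (n : ℝ) ^ δ = ∏ p ∈ n.primeFactors, ((p : ℝ) ^ δ) ^ n.factorization p := by
  have hprod : (n : ℝ) = ∏ p ∈ n.primeFactors, (p : ℝ) ^ n.factorization p := by
    exact_mod_cast (Nat.prod_factorization_pow_eq_self hn).symm
  simp_rw [Real.rpow_pow_comm (Nat.cast_nonneg _)]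
  rw [Real.finsetProd_rpow _ _ fun p _ ↦ by positivity, ← hprod]

section DivisorBound

variable {δ : ℝ} {P : ℕ}

theorem natCast_add_one_le_ite_mul_rpow_pow (hδ : 0 < δ) (hP : 2 ≤ (P : ℝ) ^ δ)
    {p : ℕ} (hp : 2 ≤ p) (k : ℕ) :
    (k : ℝ) + 1 ≤ (if p < P then (2 : ℝ) ^ δ / (2 ^ δ - 1) else 1) * ((p : ℝ) ^ δ) ^ k := by
  split_ifs with hpP
  · have one_lt : 1 < (2 : ℝ) ^ δ := Real.one_lt_rpow one_lt_two hδ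
    have : 0 < (2 : ℝ) ^ δ - 1 := sub_pos.mpr one_lt
    calc (k : ℝ) + 1 ≤ (2 : ℝ) ^ δ / (2 ^ δ - 1) * ((2 : ℝ) ^ δ) ^ k :=
          natCast_add_one_le_div_mul_pow one_lt k
      _ ≤ (2 : ℝ) ^ δ / (2 ^ δ - 1) * ((p : ℝ) ^ δ) ^ k := by
          gcongr
          exact_mod_cast hp
  · have two_le : 2 ≤ (p : ℝ) ^ δ := hP.trans (by gcongr; exact not_lt.mp hpP)
    rw [one_mul]
    exact natCast_add_one_le_pow_of_two_le two_le k

theorem card_divisors_le_pow_mul_rpow (hδ : 0 < δ) (hP : 2 ≤ (P : ℝ) ^ δ) {n : ℕ} (hn : n ≠ 0) :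
    (#n.divisors : ℝ) ≤ ((2 : ℝ) ^ δ / (2 ^ δ - 1)) ^ P * (n : ℝ) ^ δ := by
  set K : ℝ := (2 : ℝ) ^ δ / (2 ^ δ - 1)
  have one_le_K : 1 ≤ K := by
    simpa using natCast_add_one_le_div_mul_pow (Real.one_lt_rpow one_lt_two hδ) 0
  have card_small : #{p ∈ n.primeFactors | p < P} ≤ P := by
    simpa using card_le_card (t := range P) fun p hp ↦ mem_range.mpr (mem_filter.mp hp).2
  calc (#n.divisors : ℝ) = ∏ p ∈ n.primeFactors, ((n.factorization p : ℝ) + 1) := by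
        rw [Nat.card_divisors hn]
        push_cast
        rfl
    _ ≤ ∏ p ∈ n.primeFactors, (if p < P then K else 1) * ((p : ℝ) ^ δ) ^ n.factorization p :=
        prod_le_prod (fun p _ ↦ by positivity) fun p hp ↦
          natCast_add_one_le_ite_mul_rpow_pow hδ hP (Nat.prime_of_mem_primeFactors hp).two_le _
    _ = K ^ #{p ∈ n.primeFactors | p < P} * (n : ℝ) ^ δ := by
        rw [prod_mul_distrib, ← prod_filter, prod_const, natCast_rpow_eq_prod_primeFactors hn]
    _ ≤ K ^ P * (n : ℝ) ^ δ := by gcongr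

theorem exists_card_divisors_le_mul_rpow (hδ : 0 < δ) :
    ∃ C : ℝ, ∀ n : ℕ, n ≠ 0 → (#n.divisors : ℝ) ≤ C * (n : ℝ) ^ δ := by
  obtain ⟨P, hP⟩ : ∃ P : ℕ, 2 ≤ (P : ℝ) ^ δ :=
    (((tendsto_rpow_atTop hδ).comp tendsto_natCast_atTop_atTop).eventually_ge_atTop 2).exists
  exact ⟨_, fun n hn ↦ card_divisors_le_pow_mul_rpow hδ hP hn⟩

theorem card_int_divisorsAntidiag (z : ℤ) : #z.divisorsAntidiag = 2 * #z.natAbs.divisors := by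
  have card_nat (n : ℕ) : #n.divisorsAntidiagonal = #n.divisors := by
    rw [← Nat.map_div_right_divisors, card_map]
  cases z <;> simp only [Int.divisorsAntidiag, card_disjUnion, card_map, card_nat, two_mul,
    Int.ofNat_eq_natCast, Int.natAbs_natCast, Int.natAbs_negSucc]

theorem exists_card_int_divisorsAntidiag_le_mul_rpow (hδ : 0 < δ) :
    ∃ C : ℝ, 0 ≤ C ∧ ∀ z : ℤ, z ≠ 0 → (#z.divisorsAntidiag : ℝ) ≤ C * |(z : ℝ)| ^ δ := by
  obtain ⟨C, hC⟩ := exists_card_divisors_le_mul_rpow hδ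
  have C_nonneg : 0 ≤ C := zero_le_one.trans (by simpa using hC 1 one_ne_zero)
  refine ⟨2 * C, by positivity, fun z hz ↦ ?_⟩
  calc (#z.divisorsAntidiag : ℝ) = 2 * #z.natAbs.divisors := by
        exact_mod_cast card_int_divisorsAntidiag z
    _ ≤ 2 * (C * (z.natAbs : ℝ) ^ δ) := by
        gcongr
        exact hC _ (Int.natAbs_ne_zero.mpr hz)
    _ = 2 * C * |(z : ℝ)| ^ δ := by rw [Nat.cast_natAbs, Int.cast_abs, mul_assoc]

end DivisorBound

theorem card_Icc_neg_floor_le {Y : ℝ} (hY : 0 ≤ Y) : (#(Icc (-⌊Y⌋) ⌊Y⌋) : ℝ) ≤ 2 * Y + 1 := by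
  have floor_nonneg : 0 ≤ ⌊Y⌋ := Int.floor_nonneg.mpr hY
  have card_eq : (#(Icc (-⌊Y⌋) ⌊Y⌋) : ℤ) = 2 * ⌊Y⌋ + 1 := by
    rw [Int.card_Icc_of_le _ _ (by linarith)]
    ring
  calc (#(Icc (-⌊Y⌋) ⌊Y⌋) : ℝ) = 2 * ⌊Y⌋ + 1 := by exact_mod_cast card_eq
    _ ≤ 2 * Y + 1 := by gcongr; exact Int.floor_le Y

theorem mem_Icc_neg_floor_iff {Y : ℝ} {m : ℤ} : m ∈ Icc (-⌊Y⌋) ⌊Y⌋ ↔ |(m : ℝ)| ≤ Y := by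
  rw [mem_Icc, neg_le, Int.le_floor, Int.le_floor, Int.cast_neg, neg_le, abs_le]

theorem descartes_equation_iff (a b c d : ℤ) :
    2 * (a ^ 2 + b ^ 2 + c ^ 2 + d ^ 2) = (a + b + c + d) ^ 2 ↔
      ∃ m : ℤ, d = a + b + c + 2 * m ∧ (a + b) * (c + b) = b ^ 2 + m ^ 2 := by
  constructor
  · intro h
    have sq_eq : (d - a - b - c) ^ 2 = 2 * (2 * ((a + b) * (c + b) - b ^ 2)) := by linarith
    obtain ⟨m, hm⟩ : 2 ∣ d - a - b - c := Int.prime_two.dvd_of_dvd_pow ⟨_, sq_eq⟩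
    rw [hm] at sq_eq
    exact ⟨m, by linarith, by linarith⟩
  · rintro ⟨m, rfl, hm⟩
    linear_combination -4 * hm

/-- The integral solutions `(a, c, d)` of Descartes' equation whose second coordinate is the given
`b` and whose other coordinates lie in `[-X, X]`. -/
def descartesFiber (b : ℤ) (X : ℝ) : Set (ℤ × ℤ × ℤ) :=
  {t | |(t.1 : ℝ)| ≤ X ∧ |(t.2.1 : ℝ)| ≤ X ∧ |(t.2.2 : ℝ)| ≤ X ∧
    2 * (t.1 ^ 2 + b ^ 2 + t.2.1 ^ 2 + t.2.2 ^ 2) = (t.1 + b + t.2.1 + t.2.2) ^ 2}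

section Fiber

variable {b : ℤ} {X : ℝ}

theorem descartesFiber_subset_biUnion (hb : b ≠ 0) (hbX : |(b : ℝ)| ≤ X) :
    descartesFiber b X ⊆ (Icc (-⌊2 * X⌋) ⌊2 * X⌋).biUnion fun m ↦
      (b ^ 2 + m ^ 2).divisorsAntidiag.image fun p ↦ (p.1 - b, p.2 - b, p.1 + p.2 - b + 2 * m) := by
  rintro ⟨a, c, d⟩ ⟨ha, hc, hd, hdesc⟩
  obtain ⟨m, hdm, hfactor⟩ := (descartes_equation_iff a b c d).mp hdesc
  have abs_m_le : |(m : ℝ)| ≤ 2 * X := by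
    have hdm_real : (d : ℝ) = a + b + c + 2 * m := by exact_mod_cast hdm
    rw [abs_le] at ha hbX hc hd ⊢
    constructor <;> linarith
  simp only [mem_coe, mem_biUnion, mem_image]
  refine ⟨m, mem_Icc_neg_floor_iff.mpr abs_m_le, (a + b, c + b), ?_, ?_⟩
  · exact Int.mem_divisorsAntidiag.mpr ⟨hfactor, by positivity⟩
  · ext <;> simp only [hdm] <;> ring

theorem ncard_descartesFiber_le_sum (hb : b ≠ 0) (hbX : |(b : ℝ)| ≤ X) :
    (descartesFiber b X).ncard ≤
      ∑ m ∈ Icc (-⌊2 * X⌋) ⌊2 * X⌋, #(b ^ 2 + m ^ 2).divisorsAntidiag := by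
  refine (Set.ncard_le_ncard (descartesFiber_subset_biUnion hb hbX) (finite_toSet _)).trans ?_
  rw [Set.ncard_coe_finset]
  exact card_biUnion_le.trans (sum_le_sum fun m _ ↦ card_image_le)

theorem abs_sq_add_sq_rpow_le {ε x y : ℝ} (hε : 0 ≤ ε) (hx : |x| ≤ X) (hy : |y| ≤ 2 * X) :
    |x ^ 2 + y ^ 2| ^ (ε / 2) ≤ 5 ^ (ε / 2) * X ^ ε := by
  have X_nonneg : 0 ≤ X := (abs_nonneg x).trans hx
  have sum_le : |x ^ 2 + y ^ 2| ≤ 5 * X ^ 2 := by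
    rw [abs_of_nonneg (by positivity)]
    linarith [sq_le_sq' (abs_le.mp hx).1 (abs_le.mp hx).2,
      sq_le_sq' (abs_le.mp hy).1 (abs_le.mp hy).2]
  calc |x ^ 2 + y ^ 2| ^ (ε / 2) ≤ (5 * X ^ 2) ^ (ε / 2) := by gcongr
    _ = 5 ^ (ε / 2) * X ^ ε := by
        rw [Real.mul_rpow (by norm_num) (by positivity), ← Real.rpow_natCast_mul X_nonneg,
          Nat.cast_ofNat, mul_div_cancel₀ ε two_ne_zero]

end Fiber

/-- For fixed nonzero `b`, the number of integer triples `(a,c,d)` with all entries of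
absolute value at most `X` satisfying Descartes' equation is `O_ε(X^{1+ε})`. -/
theorem descartes_fiber_count (ε : ℝ) (hε : 0 < ε) :
    ∃ Cε : ℝ, ∀ b : ℤ, b ≠ 0 → ∀ X : ℝ, 2 ≤ X → |(b : ℝ)| ≤ X →
      (({t : ℤ × ℤ × ℤ | |(t.1 : ℝ)| ≤ X ∧ |(t.2.1 : ℝ)| ≤ X ∧ |(t.2.2 : ℝ)| ≤ X ∧
          2 * (t.1 ^ 2 + b ^ 2 + t.2.1 ^ 2 + t.2.2 ^ 2) =
            (t.1 + b + t.2.1 + t.2.2) ^ 2}.ncard : ℝ)) ≤ Cε * X ^ (1 + ε) := by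
  obtain ⟨C, C_nonneg, hC⟩ := exists_card_int_divisorsAntidiag_le_mul_rpow (half_pos hε)
  refine ⟨5 * (C * 5 ^ (ε / 2)), fun b hb X hX hbX ↦ ?_⟩
  have X_pos : 0 < X := by linarith
  have card_le : ∀ m ∈ Icc (-⌊2 * X⌋) ⌊2 * X⌋,
      (#(b ^ 2 + m ^ 2).divisorsAntidiag : ℝ) ≤ C * (5 ^ (ε / 2) * X ^ ε) := fun m hm ↦ by
    refine (hC _ (by positivity)).trans ?_
    push_cast
    gcongr
    exact abs_sq_add_sq_rpow_le hε.le hbX (mem_Icc_neg_floor_iff.mp hm)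
  calc ((descartesFiber b X).ncard : ℝ)
      ≤ ∑ m ∈ Icc (-⌊2 * X⌋) ⌊2 * X⌋, (#(b ^ 2 + m ^ 2).divisorsAntidiag : ℝ) := by
        exact_mod_cast ncard_descartesFiber_le_sum hb hbX
    _ ≤ #(Icc (-⌊2 * X⌋) ⌊2 * X⌋) * (C * (5 ^ (ε / 2) * X ^ ε)) := by
        simpa only [nsmul_eq_mul] using sum_le_card_nsmul _ _ _ card_le
    _ ≤ (5 * X) * (C * (5 ^ (ε / 2) * X ^ ε)) := by
        gcongr
        linarith [card_Icc_neg_floor_le (Y := 2 * X) (by positivity)]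
    _ = 5 * (C * 5 ^ (ε / 2)) * X ^ (1 + ε) := by
        rw [Real.rpow_add X_pos, Real.rpow_one]
        ring
end

section
/- Let K ≥ 1 and R ≥ 1 be real numbers. Let f(x,y) = A x² + 2B x y + C y² and f₁(x,y) = A₁ x² + 2B₁ x y + C₁ y² be integral binary quadratic forms with A, C, A₁, C₁ > 0 and AC − B² = A₁C₁ − B₁² = a² for some nonzero integer a with a² ≥ R²/K, and suppose R/K ≤ A, C, A₁, C₁ ≤ K R. If there is a matrix (α β; γ δ) ∈ SL₂(ℤ) with f₁(x,y) = f(αx + βy, γx + δy) for all x, y (equivalently A₁ = Aα² + 2Bαγ + Cγ², B₁ = Aαβ + B(αδ+βγ) + Cγδ, C₁ = Aβ² + 2Bβδ + Cδ²), then max(|α|, |β|, |γ|, |δ|) ≤ 2K³. -/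
/-!
The columns `(α, γ)` and `(β, δ)` of the substitution are vectors at which `f` takes the values
`A₁` and `C₁`. Completing the square, `C * f(x, y) = (A * C - B ^ 2) * x ^ 2 + (B * x + C * y) ^ 2`,
so a vector at which `f` is at most `K * R` has `x ^ 2 ≤ (K * R) ^ 2 / (R ^ 2 / K) = K ^ 3`, and by
symmetry the same bound holds for `y`.
-/

/-- The value at `(x, y)` of the binary quadratic form `A x² + 2B x y + C y²`; the middle
coefficient is `2B`, so that `A C - B²` is the determinant of the Gram matrix. -/
def binaryForm {S : Type*} [CommSemiring S] (A B C x y : S) : S :=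
  A * x ^ 2 + 2 * B * x * y + C * y ^ 2

namespace binaryForm

theorem swap {S : Type*} [CommSemiring S] (A B C x y : S) :
    binaryForm C B A y x = binaryForm A B C x y := by
  unfold binaryForm
  ring

theorem mul_eq_det_mul_sq_add_sq {S : Type*} [CommRing S] (A B C x y : S) :
    C * binaryForm A B C x y = (A * C - B ^ 2) * x ^ 2 + (B * x + C * y) ^ 2 := by
  unfold binaryForm
  ring

theorem det_mul_sq_le_sq {S : Type*} [CommRing S] [LinearOrder S] [IsStrictOrderedRing S]
    {A B C M x y : S} (hC : 0 ≤ C) (hCM : C ≤ M) (hM : binaryForm A B C x y ≤ M) :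
    (A * C - B ^ 2) * x ^ 2 ≤ M ^ 2 :=
  calc (A * C - B ^ 2) * x ^ 2
      ≤ (A * C - B ^ 2) * x ^ 2 + (B * x + C * y) ^ 2 := le_add_of_nonneg_right (sq_nonneg _)
    _ = C * binaryForm A B C x y := (mul_eq_det_mul_sq_add_sq A B C x y).symm
    _ ≤ C * M := mul_le_mul_of_nonneg_left hM hC
    _ ≤ M * M := mul_le_mul_of_nonneg_right hCM (hC.trans hCM)
    _ = M ^ 2 := (sq M).symm

theorem sq_fst_le_pow_three {F : Type*} [Field F] [LinearOrder F] [IsStrictOrderedRing F]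
    {K R A B C x y : F} (hK : 0 < K) (hR : 0 < R) (hdet : R ^ 2 / K ≤ A * C - B ^ 2)
    (hC : 0 ≤ C) (hCb : C ≤ K * R) (hf : binaryForm A B C x y ≤ K * R) :
    x ^ 2 ≤ K ^ 3 := by
  have hscale : 0 < R ^ 2 / K := by positivity
  refine le_of_mul_le_mul_left ?_ hscale
  calc R ^ 2 / K * x ^ 2
      ≤ (A * C - B ^ 2) * x ^ 2 := mul_le_mul_of_nonneg_right hdet (sq_nonneg x)
    _ ≤ (K * R) ^ 2 := det_mul_sq_le_sq hC hCb hf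
    _ = R ^ 2 / K * K ^ 3 := by field_simp

theorem sq_snd_le_pow_three {F : Type*} [Field F] [LinearOrder F] [IsStrictOrderedRing F]
    {K R A B C x y : F} (hK : 0 < K) (hR : 0 < R) (hdet : R ^ 2 / K ≤ A * C - B ^ 2)
    (hA : 0 ≤ A) (hAb : A ≤ K * R) (hf : binaryForm A B C x y ≤ K * R) :
    y ^ 2 ≤ K ^ 3 :=
  sq_fst_le_pow_three hK hR (mul_comm A C ▸ hdet) hA hAb ((swap A B C x y).trans_le hf)

end binaryForm

theorem equivalent_forms_bounded_substitution_general
    {K R A B C A₁ C₁ α β γ δ : ℝ} (hK : 0 < K) (hR : 0 < R) (hA : 0 ≤ A) (hC : 0 ≤ C)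
    (hdet : R ^ 2 / K ≤ A * C - B ^ 2)
    (hAb : A ≤ K * R) (hCb : C ≤ K * R) (hA₁b : A₁ ≤ K * R) (hC₁b : C₁ ≤ K * R)
    (hA₁ : A₁ = A * α ^ 2 + 2 * B * α * γ + C * γ ^ 2)
    (hC₁ : C₁ = A * β ^ 2 + 2 * B * β * δ + C * δ ^ 2) :
    max (max |α| |β|) (max |γ| |δ|) ≤ √(K ^ 3) := by
  have hαγ : binaryForm A B C α γ ≤ K * R := hA₁.symm.trans_le hA₁b
  have hβδ : binaryForm A B C β δ ≤ K * R := hC₁.symm.trans_le hC₁b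
  have hα : α ^ 2 ≤ K ^ 3 := binaryForm.sq_fst_le_pow_three hK hR hdet hC hCb hαγ
  have hβ : β ^ 2 ≤ K ^ 3 := binaryForm.sq_fst_le_pow_three hK hR hdet hC hCb hβδ
  have hγ : γ ^ 2 ≤ K ^ 3 := binaryForm.sq_snd_le_pow_three hK hR hdet hA hAb hαγ
  have hδ : δ ^ 2 ≤ K ^ 3 := binaryForm.sq_snd_le_pow_three hK hR hdet hA hAb hβδ
  exact max_le (max_le (Real.abs_le_sqrt hα) (Real.abs_le_sqrt hβ))
    (max_le (Real.abs_le_sqrt hγ) (Real.abs_le_sqrt hδ))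

/-- Two equivalent binary quadratic forms of the given shape (coefficients of size about `R`,
discriminant `−4a²` with `a² ≳ R²`) can only be related by a substitution with entries `O(1)`. -/
theorem equivalent_forms_bounded_substitution
    (K R : ℝ) (hK : 1 ≤ K) (hR : 1 ≤ R)
    (A B C A₁ B₁ C₁ a : ℤ)
    (hA : 0 < A) (hC : 0 < C) (hA₁ : 0 < A₁) (hC₁ : 0 < C₁) (ha : a ≠ 0)
    (hdisc : A * C - B ^ 2 = a ^ 2) (hdisc₁ : A₁ * C₁ - B₁ ^ 2 = a ^ 2)
    (ha2 : R ^ 2 / K ≤ (a : ℝ) ^ 2)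
    (hAb : R / K ≤ (A : ℝ) ∧ (A : ℝ) ≤ K * R)
    (hCb : R / K ≤ (C : ℝ) ∧ (C : ℝ) ≤ K * R)
    (hA₁b : R / K ≤ (A₁ : ℝ) ∧ (A₁ : ℝ) ≤ K * R)
    (hC₁b : R / K ≤ (C₁ : ℝ) ∧ (C₁ : ℝ) ≤ K * R)
    (α β γ δ : ℤ) (hdet : α * δ - β * γ = 1)
    (h1 : A₁ = A * α ^ 2 + 2 * B * α * γ + C * γ ^ 2)
    (h2 : B₁ = A * α * β + B * (α * δ + β * γ) + C * γ * δ)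
    (h3 : C₁ = A * β ^ 2 + 2 * B * β * δ + C * δ ^ 2) :
    max (max |(α : ℝ)| |(β : ℝ)|) (max |(γ : ℝ)| |(δ : ℝ)|) ≤ 2 * K ^ 3 := by
  have hK3 : 1 ≤ K ^ 3 := one_le_pow₀ hK
  have hsqrt : √(K ^ 3) ≤ 2 * K ^ 3 := (Real.sqrt_le_self_iff.mpr (.inr hK3)).trans (by linarith)
  exact (equivalent_forms_bounded_substitution_general (B := B) (by linarith) (by linarith)
    (mod_cast hA.le) (mod_cast hC.le) (ha2.trans_eq (mod_cast hdisc.symm))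
    hAb.2 hCb.2 hA₁b.2 hC₁b.2 (mod_cast h1) (mod_cast h3)).trans hsqrt
end

section
/- For every ε > 0 there is a constant C_ε with the following property. Let R ≥ 2 and let a and a₁ be distinct positive integers with a ≤ R, a₁ ≤ R, such that every prime factor of a and every prime factor of a₁ is at least R^{1/320}. Then for every real Q ≥ 1, ∑_{Q < q ≤ 2Q} gcd(a², q)^{1/2} · gcd(a₁², q)^{1/2} · gcd(a − a₁, q)^{1/4} ≤ C_ε · R^ε · Q^{5/4}, where the sum is over integers q. -/
/-!
The trivial bound `gcd (a - a₁, q) ≤ q` for the last factor already accounts for the exponent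
`5 / 4`. By Cauchy–Schwarz the rest reduces to `∑ q ≤ N, gcd (n, q) ≤ N * τ n`, where `τ` counts
divisors. If `a ≤ R` has no prime factor below `R ^ δ`, then it has at most `1 / δ` prime
factors counted with multiplicity, so `τ (a ^ 2)` is bounded in terms of `δ` alone.
-/

open Finset
open scoped ArithmeticFunction.Omega

theorem card_divisors_le_two_pow_cardFactors (n : ℕ) : #n.divisors ≤ 2 ^ Ω n := by
  rcases eq_or_ne n 0 with rfl | hn
  · simp
  rw [Nat.card_divisors hn, ArithmeticFunction.cardFactors_eq_sum_factorization, Finsupp.sum,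
    Nat.support_factorization, ← prod_pow_eq_pow_sum]
  exact prod_le_prod' fun p _ => Nat.lt_two_pow_self

theorem pow_cardFactors_le {y : ℝ} (hy : 0 ≤ y) {n : ℕ} (hn : n ≠ 0)
    (hrough : ∀ p : ℕ, p.Prime → p ∣ n → y ≤ p) : y ^ Ω n ≤ n := by
  calc y ^ Ω n = ∏ p ∈ n.primeFactors, y ^ n.factorization p := by
        rw [ArithmeticFunction.cardFactors_eq_sum_factorization, Finsupp.sum,
          Nat.support_factorization, prod_pow_eq_pow_sum]
    _ ≤ ∏ p ∈ n.primeFactors, (p : ℝ) ^ n.factorization p := by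
        refine prod_le_prod (fun p _ => by positivity) fun p hp => ?_
        have hyp : y ≤ p :=
          hrough p (Nat.prime_of_mem_primeFactors hp) (Nat.dvd_of_mem_primeFactors hp)
        gcongr
    _ = n := mod_cast Nat.prod_factorization_pow_eq_self hn

section Rough

variable {R δ : ℝ} {n : ℕ}

theorem cardFactors_le_inv_of_rough (hR : 1 < R) (hδ : 0 < δ) (hn : n ≠ 0) (hnR : n ≤ R)
    (hrough : ∀ p : ℕ, p.Prime → p ∣ n → R ^ δ ≤ p) : (Ω n : ℝ) ≤ δ⁻¹ := by
  have hpow : R ^ (δ * Ω n) ≤ R ^ (1 : ℝ) := by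
    rw [Real.rpow_mul_natCast (by positivity), Real.rpow_one]
    exact (pow_cardFactors_le (by positivity) hn hrough).trans hnR
  rw [← one_div, le_div_iff₀' hδ]
  exact (Real.rpow_le_rpow_left_iff hR).1 hpow

theorem card_divisors_pow_le_of_rough (hR : 1 < R) (hδ : 0 < δ) (hn : n ≠ 0) (hnR : n ≤ R)
    (hrough : ∀ p : ℕ, p.Prime → p ∣ n → R ^ δ ≤ p) (j : ℕ) :
    (#(n ^ j).divisors : ℝ) ≤ 2 ^ (j * δ⁻¹) := by
  calc (#(n ^ j).divisors : ℝ) ≤ 2 ^ Ω (n ^ j) :=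
        mod_cast card_divisors_le_two_pow_cardFactors (n ^ j)
    _ = 2 ^ (j * Ω n : ℝ) := by
        rw [ArithmeticFunction.cardFactors_pow, ← Real.rpow_natCast, Nat.cast_mul]
    _ ≤ 2 ^ (j * δ⁻¹) := by
        have hΩ := cardFactors_le_inv_of_rough hR hδ hn hnR hrough
        gcongr
        norm_num

end Rough

theorem sum_Ioc_ite_dvd_le (d M N : ℕ) : ∑ q ∈ Ioc M N, (if d ∣ q then d else 0) ≤ N := by
  calc ∑ q ∈ Ioc M N, (if d ∣ q then d else 0)
      ≤ ∑ q ∈ Ioc 0 N, (if d ∣ q then d else 0) :=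
        sum_le_sum_of_subset (Ioc_subset_Ioc_left M.zero_le)
    _ = N / d * d := by
        rw [← sum_filter, sum_const, Nat.Ioc_filter_dvd_card_eq_div, smul_eq_mul]
    _ ≤ N := Nat.div_mul_le_self N d

theorem gcd_le_sum_divisors {n : ℕ} (hn : n ≠ 0) (q : ℕ) :
    n.gcd q ≤ ∑ d ∈ n.divisors, if d ∣ q then d else 0 := by
  have hmem : n.gcd q ∈ n.divisors := Nat.mem_divisors.2 ⟨Nat.gcd_dvd_left n q, hn⟩
  simpa [Nat.gcd_dvd_right] using
    single_le_sum (f := fun d => if d ∣ q then d else 0) (fun _ _ => Nat.zero_le _) hmem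

theorem sum_Ioc_gcd_le {n : ℕ} (hn : n ≠ 0) (M N : ℕ) :
    ∑ q ∈ Ioc M N, n.gcd q ≤ #n.divisors * N := by
  calc ∑ q ∈ Ioc M N, n.gcd q
      ≤ ∑ q ∈ Ioc M N, ∑ d ∈ n.divisors, (if d ∣ q then d else 0) :=
        sum_le_sum fun q _ => gcd_le_sum_divisors hn q
    _ = ∑ d ∈ n.divisors, ∑ q ∈ Ioc M N, (if d ∣ q then d else 0) := sum_comm
    _ ≤ ∑ _d ∈ n.divisors, N := sum_le_sum fun d _ => sum_Ioc_ite_dvd_le d M N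
    _ = #n.divisors * N := by rw [sum_const, smul_eq_mul]

theorem sum_Ioc_sqrt_gcd_mul_sqrt_gcd_le {m n : ℕ} (hm : m ≠ 0) (hn : n ≠ 0) (M N : ℕ) :
    ∑ q ∈ Ioc M N, √(m.gcd q) * √(n.gcd q) ≤ √(#m.divisors * #n.divisors) * N := by
  have hsum {l : ℕ} (hl : l ≠ 0) : ∑ q ∈ Ioc M N, (l.gcd q : ℝ) ≤ #l.divisors * N :=
    mod_cast sum_Ioc_gcd_le hl M N
  calc ∑ q ∈ Ioc M N, √(m.gcd q) * √(n.gcd q)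
      ≤ √(∑ q ∈ Ioc M N, (m.gcd q : ℝ)) * √(∑ q ∈ Ioc M N, (n.gcd q : ℝ)) :=
        Real.sum_sqrt_mul_sqrt_le _ (fun _ => Nat.cast_nonneg _) fun _ => Nat.cast_nonneg _
    _ ≤ √(#m.divisors * N) * √(#n.divisors * N) := by
        gcongr
        exacts [hsum hm, hsum hn]
    _ = √(#m.divisors * #n.divisors) * N := by
        rw [← Real.sqrt_mul (by positivity), mul_mul_mul_comm, Real.sqrt_mul (by positivity),
          Real.sqrt_mul_self (by positivity)]

theorem sum_Ioc_sqrt_gcd_mul_sqrt_gcd_mul_gcd_rpow_le {m n : ℕ} (hm : m ≠ 0) (hn : n ≠ 0) (k : ℤ)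
    {θ : ℝ} (hθ : 0 ≤ θ) (M N : ℕ) :
    ∑ q ∈ Ioc M N, √(m.gcd q) * √(n.gcd q) * (k.gcd q : ℝ) ^ θ
      ≤ √(#m.divisors * #n.divisors) * (N : ℝ) ^ (1 + θ) := by
  have hgcd {q : ℕ} (hq : q ∈ Ioc M N) : k.gcd q ≤ N := by
    obtain ⟨hMq, hqN⟩ := mem_Ioc.1 hq
    have hdvd : k.gcd q ∣ q := mod_cast Int.gcd_dvd_right k q
    exact (Nat.le_of_dvd (by lia) hdvd).trans hqN
  calc ∑ q ∈ Ioc M N, √(m.gcd q) * √(n.gcd q) * (k.gcd q : ℝ) ^ θ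
      ≤ ∑ q ∈ Ioc M N, √(m.gcd q) * √(n.gcd q) * (N : ℝ) ^ θ := by
        gcongr with q hq
        exact hgcd hq
    _ ≤ √(#m.divisors * #n.divisors) * N * (N : ℝ) ^ θ := by
        rw [← sum_mul]
        gcongr
        exact sum_Ioc_sqrt_gcd_mul_sqrt_gcd_le hm hn M N
    _ = √(#m.divisors * #n.divisors) * (N : ℝ) ^ (1 + θ) := by
        rw [Real.rpow_one_add' (by positivity) (by positivity), mul_assoc]

theorem gcd_sum_bound_general {δ R : ℝ} (hδ : 0 < δ) (hR : 1 < R) {a b : ℕ} (ha : a ≠ 0)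
    (hb : b ≠ 0) (haR : a ≤ R) (hbR : b ≤ R) (ha_rough : ∀ p : ℕ, p.Prime → p ∣ a → R ^ δ ≤ p)
    (hb_rough : ∀ p : ℕ, p.Prime → p ∣ b → R ^ δ ≤ p) (k : ℤ) {θ : ℝ} (hθ : 0 ≤ θ)
    {Q : ℝ} (hQ : 0 ≤ Q) :
    ∑ q ∈ Ioc ⌊Q⌋₊ ⌊2 * Q⌋₊, √((a ^ 2).gcd q) * √((b ^ 2).gcd q) * (k.gcd q : ℝ) ^ θ
      ≤ 2 ^ (2 * δ⁻¹) * 2 ^ (1 + θ) * Q ^ (1 + θ) := by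
  have hτa : (#(a ^ 2).divisors : ℝ) ≤ 2 ^ (2 * δ⁻¹) :=
    mod_cast card_divisors_pow_le_of_rough hR hδ ha haR ha_rough 2
  have hτb : (#(b ^ 2).divisors : ℝ) ≤ 2 ^ (2 * δ⁻¹) :=
    mod_cast card_divisors_pow_le_of_rough hR hδ hb hbR hb_rough 2
  calc _ ≤ √(#(a ^ 2).divisors * #(b ^ 2).divisors) * (⌊2 * Q⌋₊ : ℝ) ^ (1 + θ) :=
        sum_Ioc_sqrt_gcd_mul_sqrt_gcd_mul_gcd_rpow_le (pow_ne_zero 2 ha) (pow_ne_zero 2 hb) k hθ _ _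
    _ ≤ √(2 ^ (2 * δ⁻¹) * 2 ^ (2 * δ⁻¹)) * (2 * Q) ^ (1 + θ) := by
        gcongr
        exact Nat.floor_le (by positivity)
    _ = 2 ^ (2 * δ⁻¹) * 2 ^ (1 + θ) * Q ^ (1 + θ) := by
        rw [Real.sqrt_mul_self (by positivity), Real.mul_rpow zero_le_two hQ, mul_assoc]

/-- For distinct `a, a₁ ≤ R` all of whose prime factors are at least `R^{1/320}`, the sum
`∑_{Q < q ≤ 2Q} gcd(a²,q)^{1/2} gcd(a₁²,q)^{1/2} gcd(a−a₁,q)^{1/4}` is `O_ε(R^ε Q^{5/4})`. -/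
theorem gcd_sum_bound (ε : ℝ) (hε : 0 < ε) :
    ∃ Cε : ℝ, ∀ R : ℝ, 2 ≤ R → ∀ a a₁ : ℕ,
      a ≠ a₁ → 1 ≤ a → 1 ≤ a₁ → (a : ℝ) ≤ R → (a₁ : ℝ) ≤ R →
      (∀ p : ℕ, p.Prime → p ∣ a → R ^ ((1 : ℝ) / 320) ≤ (p : ℝ)) →
      (∀ p : ℕ, p.Prime → p ∣ a₁ → R ^ ((1 : ℝ) / 320) ≤ (p : ℝ)) →
      ∀ Q : ℝ, 1 ≤ Q →
        (∑ q ∈ Finset.Ioc ⌊Q⌋₊ ⌊2 * Q⌋₊,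
            ((Nat.gcd (a ^ 2) q : ℝ)) ^ ((1 : ℝ) / 2) *
              ((Nat.gcd (a₁ ^ 2) q : ℝ)) ^ ((1 : ℝ) / 2) *
              ((Int.gcd ((a : ℤ) - (a₁ : ℤ)) (q : ℤ) : ℝ)) ^ ((1 : ℝ) / 4))
          ≤ Cε * R ^ ε * Q ^ ((5 : ℝ) / 4) := by
  refine ⟨2 ^ (2 * (1 / 320 : ℝ)⁻¹) * 2 ^ (1 + 1 / 4 : ℝ), ?_⟩
  intro R hR a a₁ _ ha ha₁ haR ha₁R ha_rough ha₁_rough Q hQ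
  rw [show (5 : ℝ) / 4 = 1 + 1 / 4 by norm_num]
  simp only [← Real.sqrt_eq_rpow]
  refine (gcd_sum_bound_general (by norm_num) (by linarith) (by lia) (by lia) haR ha₁R
    ha_rough ha₁_rough (a - a₁) (by norm_num) (by linarith)).trans ?_
  have hRε : 1 ≤ R ^ ε := Real.one_le_rpow (by linarith) hε.le
  exact mul_le_mul_of_nonneg_right (le_mul_of_one_le_right (by positivity) hRε) (by positivity)
end

section
/- Let p be an odd prime, r ≥ 1, q = p^r. Let A, B, C, a be integers with a² = AC − B² and p ∤ A, p ∤ a, and let m be an integer. Then the number of pairs (x, y) ∈ (ℤ/qℤ)² with A x² + 2B x y + C y² ≡ m (mod q) equals the number of pairs (u, v) ∈ (ℤ/qℤ)² with u² + v² ≡ A m (mod q); moreover the same equality holds for the counts restricted to pairs with p not dividing both coordinates (i.e. gcd(x, y, p) = 1 on the left and gcd(u, v, p) = 1 on the right). -/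
/-!
Completing the square, `u = A x + B y` and `v = a y` with `a² = A C - B²` give
`A (A x² + 2 B x y + C y²) = u² + v²`. When `A` and `a` are units this substitution is a linear
automorphism of `R²`, so it matches the solutions of the two equations and preserves the pairs that
generate the unit ideal. Over the local ring `ℤ/pʳℤ` such pairs are those with a unit coordinate.
-/

theorem encard_setOf_eq_of_bijective {α β : Type*} {f : α → β} (hf : Function.Bijective f)
    {P : α → Prop} {Q : β → Prop} (hPQ : ∀ x, P x ↔ Q (f x)) :
    {x | P x}.encard = {y | Q y}.encard := by
  rw [← Set.encard_preimage_of_bijective hf {y | Q y}]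
  exact congrArg Set.encard (Set.ext hPQ)

section CommRing

variable {R : Type*} [CommRing R] {A B C a : R}

/-- The substitution `(x, y) ↦ (A x + B y, a y)`, which turns `A` times the binary quadratic form
`A x² + 2 B x y + C y²` of determinant `A C - B² = a²` into a sum of two squares. -/
def squareSubst (A B a : R) (xy : R × R) : R × R :=
  (A * xy.1 + B * xy.2, a * xy.2)

theorem squareSubst_bijective (hA : IsUnit A) (ha : IsUnit a) :
    Function.Bijective (squareSubst A B a) := by
  constructor
  · rintro ⟨x, y⟩ ⟨x', y'⟩ h
    obtain ⟨hu, hv⟩ := Prod.mk.inj h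
    obtain rfl : y = y' := ha.mul_right_injective hv
    obtain rfl : x = x' := hA.mul_right_injective (add_right_cancel hu)
    rfl
  · rintro ⟨u, v⟩
    obtain ⟨y, hy⟩ : a ∣ v := ha.dvd
    obtain ⟨x, hx⟩ : A ∣ u - B * y := hA.dvd
    exact ⟨(x, y), Prod.ext (eq_sub_iff_add_eq.mp hx.symm) hy.symm⟩

theorem mul_binary_form_eq_sq_add_sq_squareSubst (hdisc : a ^ 2 = A * C - B ^ 2) (xy : R × R) :
    A * (A * xy.1 ^ 2 + 2 * B * xy.1 * xy.2 + C * xy.2 ^ 2) =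
      (squareSubst A B a xy).1 ^ 2 + (squareSubst A B a xy).2 ^ 2 := by
  simp only [squareSubst]
  linear_combination -xy.2 ^ 2 * hdisc

theorem binary_form_eq_iff_squareSubst (hA : IsUnit A) (hdisc : a ^ 2 = A * C - B ^ 2)
    (m : R) (xy : R × R) :
    A * xy.1 ^ 2 + 2 * B * xy.1 * xy.2 + C * xy.2 ^ 2 = m ↔
      (squareSubst A B a xy).1 ^ 2 + (squareSubst A B a xy).2 ^ 2 = A * m := by
  rw [← mul_binary_form_eq_sq_add_sq_squareSubst hdisc, hA.mul_right_inj]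

theorem isCoprime_squareSubst_iff (hA : IsUnit A) (ha : IsUnit a) (xy : R × R) :
    IsCoprime (squareSubst A B a xy).1 (squareSubst A B a xy).2 ↔ IsCoprime xy.1 xy.2 := by
  simp only [squareSubst]
  rw [isCoprime_mul_unit_left_right ha, IsCoprime.add_mul_right_left_iff,
    isCoprime_mul_unit_left_left hA]

theorem binary_form_solution_count_general (hA : IsUnit A) (ha : IsUnit a)
    (hdisc : a ^ 2 = A * C - B ^ 2) (m : R) :
    {xy : R × R | A * xy.1 ^ 2 + 2 * B * xy.1 * xy.2 + C * xy.2 ^ 2 = m}.encard =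
        {uv : R × R | uv.1 ^ 2 + uv.2 ^ 2 = A * m}.encard ∧
      {xy : R × R | A * xy.1 ^ 2 + 2 * B * xy.1 * xy.2 + C * xy.2 ^ 2 = m ∧
          IsCoprime xy.1 xy.2}.encard =
        {uv : R × R | uv.1 ^ 2 + uv.2 ^ 2 = A * m ∧ IsCoprime uv.1 uv.2}.encard := by
  have hbij : Function.Bijective (squareSubst A B a) := squareSubst_bijective hA ha
  have hform := binary_form_eq_iff_squareSubst hA hdisc m
  have hcoprime := isCoprime_squareSubst_iff (B := B) hA ha
  exact ⟨encard_setOf_eq_of_bijective hbij hform,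
    encard_setOf_eq_of_bijective hbij fun xy ↦ and_congr (hform xy) (hcoprime xy).symm⟩

end CommRing

theorem isCoprime_iff_isUnit_or_isUnit {R : Type*} [CommRing R] [IsLocalRing R] {x y : R} :
    IsCoprime x y ↔ IsUnit x ∨ IsUnit y := by
  constructor
  · rintro ⟨s, t, hst⟩
    exact (IsLocalRing.isUnit_or_isUnit_of_add_one hst).imp
      isUnit_of_mul_isUnit_right isUnit_of_mul_isUnit_right
  · rintro (hx | hy)
    · exact (isCoprime_zero_right.mpr hx).of_isCoprime_of_dvd_right (dvd_zero y)
    · exact (isCoprime_zero_left.mpr hy).of_isCoprime_of_dvd_left (dvd_zero x)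

theorem isLocalRing_zmod_prime_pow {p r : ℕ} (hp : p.Prime) (hr : r ≠ 0) :
    IsLocalRing (ZMod (p ^ r)) := by
  have : Fact p.Prime := ⟨hp⟩
  have : Fact (1 < p ^ r) := ⟨Nat.one_lt_pow hr hp.one_lt⟩
  exact IsLocalRing.of_surjective' (PadicInt.toZModPow (p := p) r) (ZMod.ringHom_surjective _)

theorem isUnit_intCast_zmod_prime_pow {p : ℕ} (hp : p.Prime) (r : ℕ) {n : ℤ}
    (hn : ¬ (p : ℤ) ∣ n) : IsUnit (n : ZMod (p ^ r)) := by
  rw [ZMod.coe_int_isUnit_iff_isCoprime, Nat.cast_pow]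
  exact ((Nat.prime_iff_prime_int.mp hp).coprime_iff_not_dvd.mpr hn).pow_left

/-- For `q = p^r` an odd prime power and `f = A x² + 2B x y + C y²` with `p ∤ A`,
`AC − B² = a²`, `p ∤ a`, the number of solutions of `f(x,y) ≡ m (mod q)` equals the number
of solutions of `u² + v² ≡ A m (mod q)`, and likewise for solutions with at least one
coordinate a unit. -/
theorem binary_form_solution_count (p r : ℕ) (hp : p.Prime) (hodd : Odd p) (hr : 1 ≤ r)
    (A B C a m : ℤ) (ha : a ≠ 0) (hdisc : a ^ 2 = A * C - B ^ 2)
    (hpA : ¬ (p : ℤ) ∣ A) (hpa : ¬ (p : ℤ) ∣ a) :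
    ({xy : ZMod (p ^ r) × ZMod (p ^ r) |
        (A : ZMod (p ^ r)) * xy.1 ^ 2 + 2 * (B : ZMod (p ^ r)) * xy.1 * xy.2 +
          (C : ZMod (p ^ r)) * xy.2 ^ 2 = (m : ZMod (p ^ r))}.ncard
      = {uv : ZMod (p ^ r) × ZMod (p ^ r) |
          uv.1 ^ 2 + uv.2 ^ 2 = (A : ZMod (p ^ r)) * (m : ZMod (p ^ r))}.ncard) ∧
    ({xy : ZMod (p ^ r) × ZMod (p ^ r) |
        ((A : ZMod (p ^ r)) * xy.1 ^ 2 + 2 * (B : ZMod (p ^ r)) * xy.1 * xy.2 +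
          (C : ZMod (p ^ r)) * xy.2 ^ 2 = (m : ZMod (p ^ r))) ∧
        (IsUnit xy.1 ∨ IsUnit xy.2)}.ncard
      = {uv : ZMod (p ^ r) × ZMod (p ^ r) |
          (uv.1 ^ 2 + uv.2 ^ 2 = (A : ZMod (p ^ r)) * (m : ZMod (p ^ r))) ∧
          (IsUnit uv.1 ∨ IsUnit uv.2)}.ncard) := by
  have := isLocalRing_zmod_prime_pow hp (Nat.one_le_iff_ne_zero.mp hr)
  have hdisc' : (a : ZMod (p ^ r)) ^ 2 = A * C - B ^ 2 := mod_cast congrArg Int.cast hdisc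
  obtain ⟨hall, hcoprime⟩ := binary_form_solution_count_general
    (isUnit_intCast_zmod_prime_pow hp r hpA) (isUnit_intCast_zmod_prime_pow hp r hpa) hdisc' m
  simp only [isCoprime_iff_isUnit_or_isUnit] at hcoprime
  exact ⟨congrArg ENat.toNat hall, congrArg ENat.toNat hcoprime⟩
end
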